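/- Let G be an abelian group, let θ = ({X_t}_{t∈G}, {h_t}_{t∈G}) be a partial action of G on a nonempty set X, let K be a field, let α be the induced partial action of G on F₀(X), and let R = F₀(X) ⋆_α G. Then R is simple (its only two-sided ideals are {0} and R) if and only if θ is minimal and free. -/

import Mathlib

/-- A partial action `θ = ({X_t}, {h_t})` of a group `G` on a set `X`: subsets
`Xt t ⊆ X` and bijections `h t : Xt t⁻¹ → Xt t` (encoded as globally defined maps
whose values only matter on `Xt t⁻¹`). -/
structure SetPartialAction (G : Type*) [Group G] (X : Type*) where
  Xt : G → Set X
  h : G → X → X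
  h_mem : ∀ t, ∀ x ∈ Xt t⁻¹, h t x ∈ Xt t
  Xt_one : Xt 1 = Set.univ
  h_one : ∀ x, h 1 x = x
  h_left_inv : ∀ t, ∀ x ∈ Xt t⁻¹, h t⁻¹ (h t x) = x
  h_image : ∀ t s, h t '' (Xt t⁻¹ ∩ Xt s) = Xt t ∩ Xt (t * s)
  h_comp : ∀ t s, ∀ x ∈ Xt s⁻¹, x ∈ Xt (s⁻¹ * t⁻¹) → h t (h s x) = h (t * s) x

namespace SetPartialAction

variable {G : Type*} [Group G] {X : Type*}

/-- A subset `V ⊆ X` is `G`-invariant if `h t (V ∩ Xt t⁻¹) ⊆ V` for all `t`. -/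
def Invariant (θ : SetPartialAction G X) (V : Set X) : Prop :=
  ∀ t : G, θ.h t '' (V ∩ θ.Xt t⁻¹) ⊆ V

/-- `θ` is minimal if `∅` and `X` are the only `G`-invariant subsets of `X`. -/
def Minimal (θ : SetPartialAction G X) : Prop :=
  ∀ V : Set X, θ.Invariant V → V = ∅ ∨ V = Set.univ

/-- `θ` is free if `h t x = x` for some `x ∈ Xt t⁻¹` implies `t = 1`. -/
def Free (θ : SetPartialAction G X) : Prop :=
  ∀ t : G, ∀ x ∈ θ.Xt t⁻¹, θ.h t x = x → t = 1

end SetPartialAction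
section F0

variable {G : Type*} [Group G] {X : Type*} {K : Type*} [Field K]

/-- `F₀(V)`: the finitely supported functions `X → K` vanishing off `V`,
as a subset of `F₀(X) = X →₀ K`. -/
def F0 (K : Type*) [Field K] {X : Type*} (V : Set X) : Set (X →₀ K) :=
  {f : X →₀ K | ∀ x ∉ V, f x = 0}

/-- `I` is a (two-sided) ring ideal of `F₀(X)`. -/
def IsIdealF0 {X : Type*} (K : Type*) [Field K] (I : Set (X →₀ K)) : Prop :=
  (0 : X →₀ K) ∈ I ∧ (∀ f ∈ I, ∀ g ∈ I, f + g ∈ I) ∧ (∀ f ∈ I, -f ∈ I) ∧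
    (∀ f ∈ I, ∀ g : X →₀ K, f * g ∈ I ∧ g * f ∈ I)

open Classical in
/-- The induced map `α t : F₀(X) → F₀(X)`, `α t f = f ∘ h t⁻¹` on `Xt t`,
extended by zero off `Xt t`. -/
noncomputable def amap (θ : SetPartialAction G X) (K : Type*) [Field K] (t : G)
    (f : X →₀ K) : X →₀ K :=
  Finsupp.onFinset (f.support.image (θ.h t))
    (fun x => if x ∈ θ.Xt t then f (θ.h t⁻¹ x) else 0)
    (by
      intro x hx
      by_cases hxt : x ∈ θ.Xt t
      · simp only [hxt, if_true] at hx
        have hmem : θ.h t⁻¹ x ∈ f.support := Finsupp.mem_support_iff.mpr hx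
        refine Finset.mem_image.mpr ⟨θ.h t⁻¹ x, hmem, ?_⟩
        have := θ.h_left_inv t⁻¹ x (by simpa using hxt)
        simpa using this
      · simp [hxt] at hx)

/-- `I ⊆ F₀(X)` is `G`-invariant: `α t (I ∩ D t⁻¹) ⊆ I ∩ D t`. -/
def GInvariantF0 (θ : SetPartialAction G X) (K : Type*) [Field K]
    (I : Set (X →₀ K)) : Prop :=
  ∀ t : G, ∀ f ∈ I, f ∈ F0 K (θ.Xt t⁻¹) →
    amap θ K t f ∈ I ∧ amap θ K t f ∈ F0 K (θ.Xt t)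

end F0
section FSkew

variable {G : Type*} [Group G] {X : Type*}

/-- The ideal `D t = F₀(X_t)` of `F₀(X)`, as an additive subgroup. -/
def Dsub (θ : SetPartialAction G X) (K : Type*) [Field K] (t : G) :
    AddSubgroup (X →₀ K) where
  carrier := F0 K (θ.Xt t)
  zero_mem' := by intro x _; simp
  add_mem' := by intro f g hf hg x hx; simp [hf x hx, hg x hx]
  neg_mem' := by intro f hf x hx; simp [hf x hx]

variable (K : Type*) [Field K]

/-- The underlying additive group of the partial skew group ring `F₀(X) ⋆_α G`. -/
abbrev SkewF0 (θ : SetPartialAction G X) (K : Type*) [Field K] : Type _ :=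
  Π₀ t : G, ↥(Dsub θ K t)

/-- The element `f δ_t` for `f ∈ D t`. -/
noncomputable def deltaF [DecidableEq G] (θ : SetPartialAction G X) (t : G)
    (f : X →₀ K) (hf : f ∈ Dsub θ K t) : SkewF0 θ K :=
  DFinsupp.single t ⟨f, hf⟩

/-- The element `f δ_0` for arbitrary `f ∈ F₀(X) = D 1`. -/
noncomputable def deltaF0 [DecidableEq G] (θ : SetPartialAction G X) (f : X →₀ K) :
    SkewF0 θ K :=
  deltaF K θ 1 f (by intro x hx; rw [θ.Xt_one] at hx; exact absurd (Set.mem_univ x) hx)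

/-- The characteristic function `χ_A ∈ F₀(X)` of a finite set `A ⊆ X`. -/
noncomputable def chi (A : Finset X) : X →₀ K := Finsupp.indicator A fun _ _ => (1 : K)

/-- The multiplication of `F₀(X) ⋆_α G`, *assumed* to exist, to be biadditive,
associative and to satisfy `(f δ_t)(g δ_s) = α_t(α_{t⁻¹}(f) g) δ_{ts}`. -/
structure FSkewMul [DecidableEq G] (θ : SetPartialAction G X) (K : Type*) [Field K] where
  mul : SkewF0 θ K → SkewF0 θ K → SkewF0 θ K
  left_distrib : ∀ x y z, mul x (y + z) = mul x y + mul x z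
  right_distrib : ∀ x y z, mul (x + y) z = mul x z + mul y z
  mul_single : ∀ (t s : G) (a : X →₀ K) (ha : a ∈ Dsub θ K t)
      (b : X →₀ K) (hb : b ∈ Dsub θ K s) (g : G),
    ((mul (deltaF K θ t a ha) (deltaF K θ s b hb)) g : X →₀ K) =
      if g = t * s then amap θ K t (amap θ K t⁻¹ a * b) else 0
  assoc : ∀ x y z, mul (mul x y) z = mul x (mul y z)

variable [DecidableEq G] {θ : SetPartialAction G X}

/-- `J` is a two-sided ideal of the partial skew group ring `F₀(X) ⋆_α G`. -/
def IsSkewIdealF0 (S : FSkewMul θ K) (J : Set (SkewF0 θ K)) : Prop :=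
  (0 : SkewF0 θ K) ∈ J ∧ (∀ x ∈ J, ∀ y ∈ J, x + y ∈ J) ∧ (∀ x ∈ J, -x ∈ J) ∧
    (∀ x ∈ J, ∀ y : SkewF0 θ K, S.mul x y ∈ J ∧ S.mul y x ∈ J)

/-- The corner `x R x` of the partial skew group ring. -/
def cornerF (S : FSkewMul θ K) (x : SkewF0 θ K) : Set (SkewF0 θ K) :=
  {y | ∃ z, y = S.mul x (S.mul z x)}

/-- `C_e` for `e = χ_A`: the center of the corner `eδ_0 R eδ_0`. -/
def CeF (S : FSkewMul θ K) (A : Finset X) : Set (SkewF0 θ K) :=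
  {x ∈ cornerF K S (deltaF0 K θ (chi K A)) |
    ∀ y ∈ cornerF K S (deltaF0 K θ (chi K A)), S.mul x y = S.mul y x}

end FSkew

/-!
The elements `c χ_x δ_t` with `x ∈ X_t` span `F₀(X) ⋆_α G` and multiply like arrows
`h_{t⁻¹}(x) → x` of a groupoid.

The ring acts on `K^X` by `(a δ_t) f = a · (f ∘ h_{t⁻¹})`, and for invariant `V ⊆ X` it acts on the
quotient `K^(X ∖ V)`. The kernel of the latter action contains `χ_x δ_1` exactly when `x ∈ V`, so
simplicity forces minimality. If `h_t x = x`, then `χ_x δ_t - χ_x δ_1` acts as zero on `K^X`, so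
simplicity forces `t = 1`.

Conversely, when the action is free, `χ_x δ_1 · r · χ_y δ_1` with `y = h_{t⁻¹}(x)` isolates the
single term `r_t(x) χ_x δ_t`. Hence a nonzero ideal contains some `χ_x δ_1`; the set of such `x` is
invariant, so by minimality it is all of `X`, and the `χ_x δ_1` generate the ring as an ideal.
-/

namespace SetPartialAction

section PartialAction

variable {G : Type*} [Group G] {X : Type*} (θ : SetPartialAction G X) {t s : G} {x : X}

theorem mem_Xt_one (x : X) : x ∈ θ.Xt 1 :=
  θ.Xt_one ▸ Set.mem_univ x

theorem h_inv_mem (hx : x ∈ θ.Xt t) : θ.h t⁻¹ x ∈ θ.Xt t⁻¹ :=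
  θ.h_mem t⁻¹ x (by rwa [inv_inv])

theorem h_h_inv (hx : x ∈ θ.Xt t) : θ.h t (θ.h t⁻¹ x) = x := by
  simpa using θ.h_left_inv t⁻¹ x (by rwa [inv_inv])

theorem mem_Xt_mul (hx : x ∈ θ.Xt t) (hs : θ.h t⁻¹ x ∈ θ.Xt s) : x ∈ θ.Xt (t * s) := by
  have hmem : x ∈ θ.h t '' (θ.Xt t⁻¹ ∩ θ.Xt s) := ⟨_, ⟨θ.h_inv_mem hx, hs⟩, θ.h_h_inv hx⟩
  rw [θ.h_image] at hmem
  exact hmem.2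

theorem h_mul_inv (hx : x ∈ θ.Xt t) (hs : θ.h t⁻¹ x ∈ θ.Xt s) :
    θ.h (t * s)⁻¹ x = θ.h s⁻¹ (θ.h t⁻¹ x) := by
  rw [θ.h_comp s⁻¹ t⁻¹ x (by rwa [inv_inv]) (by simpa using θ.mem_Xt_mul hx hs), mul_inv_rev]

variable {θ}

theorem Invariant.mem_of_h_inv_mem {V : Set X} (hV : θ.Invariant V) (hx : x ∈ θ.Xt t)
    (hxV : θ.h t⁻¹ x ∈ V) : x ∈ V :=
  hV t ⟨_, ⟨hxV, θ.h_inv_mem hx⟩, θ.h_h_inv hx⟩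

theorem invariant_empty : θ.Invariant ∅ := by
  simp [Invariant]

theorem Free.eq_of_h_inv_eq (hθ : θ.Free) (hs : x ∈ θ.Xt s) (ht : x ∈ θ.Xt t)
    (h : θ.h s⁻¹ x = θ.h t⁻¹ x) : s = t := by
  have hts : θ.h s⁻¹ x ∈ θ.Xt t⁻¹ := h ▸ θ.h_inv_mem ht
  have hfix : θ.h (s * t⁻¹)⁻¹ x = x := by
    rw [θ.h_mul_inv hs hts, h, inv_inv, θ.h_h_inv ht]
  have hone : (s * t⁻¹)⁻¹ = 1 := hθ _ x (by simpa using θ.mem_Xt_mul hs hts) hfix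
  rwa [inv_eq_one, mul_inv_eq_one] at hone

end PartialAction

section Monomial

variable {G : Type*} [Group G] {X : Type*} {θ : SetPartialAction G X} {K : Type*} [Field K]
  {t s : G} {x y : X}

theorem amap_amap_inv_mul_apply {a : X →₀ K} (ha : a ∈ Dsub θ K t) (b : X →₀ K) (p : X) :
    amap θ K t (amap θ K t⁻¹ a * b) p = a p * b (θ.h t⁻¹ p) := by
  by_cases hp : p ∈ θ.Xt t
  · have hinv := θ.h_h_inv hp
    simp [amap, hp, θ.h_inv_mem hp, hinv]
  · have hap : a p = 0 := ha p hp
    simp [amap, hp, hap]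

theorem single_mem_Dsub (hx : x ∈ θ.Xt t) (c : K) : Finsupp.single x c ∈ Dsub θ K t := by
  intro p hp
  rw [Finsupp.single_eq_of_ne (ne_of_mem_of_not_mem hx hp).symm]

theorem mem_Xt_of_apply_ne_zero {a : X →₀ K} (ha : a ∈ Dsub θ K t) (hax : a x ≠ 0) :
    x ∈ θ.Xt t :=
  by_contra fun hx => hax (ha x hx)

variable [DecidableEq G]

/-- The element `c χ_x δ_t` of `F₀(X) ⋆_α G`, where `x ∈ X_t`. It stands for the arrow
`h_{t⁻¹}(x) → x` of the groupoid of `θ`, with coefficient `c`; `t` and `x` are read off from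
the proof of `x ∈ X_t`. -/
noncomputable def monomial (hx : x ∈ θ.Xt t) (c : K) : SkewF0 θ K :=
  deltaF K θ t (Finsupp.single x c) (single_mem_Dsub hx c)

theorem monomial_apply (hx : x ∈ θ.Xt t) (c : K) (s : G) :
    ((monomial hx c) s : X →₀ K) = if s = t then Finsupp.single x c else 0 := by
  split_ifs with h
  · subst h
    simp [monomial, deltaF]
  · simp [monomial, deltaF, DFinsupp.single_eq_of_ne h]

theorem monomial_zero (hx : x ∈ θ.Xt t) : monomial hx (0 : K) = 0 := by
  ext s : 2
  simp [monomial_apply]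

theorem monomial_add (hx : x ∈ θ.Xt t) (c d : K) :
    monomial hx (c + d) = monomial hx c + monomial hx d := by
  ext s : 2
  by_cases h : s = t <;> simp [monomial_apply, h]

theorem eq_of_monomial_eq {c d : K} (hx : x ∈ θ.Xt t) (hy : y ∈ θ.Xt s) (hc : c ≠ 0)
    (h : monomial hx c = monomial hy d) : t = s := by
  by_contra hts
  have hcoeff := congrArg (fun r : SkewF0 θ K => (r t : X →₀ K)) h
  simp [monomial_apply, hts, hc] at hcoeff

theorem monomial_ne_zero (hx : x ∈ θ.Xt t) {c : K} (hc : c ≠ 0) : monomial hx c ≠ 0 := by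
  intro h
  have hcoeff := congrArg (fun r : SkewF0 θ K => (r t : X →₀ K)) h
  simp [monomial_apply, hc] at hcoeff

theorem deltaF_single_add {a : X →₀ K} (hx : x ∈ θ.Xt t) (c : K) (ha : a ∈ Dsub θ K t)
    (h : Finsupp.single x c + a ∈ Dsub θ K t) :
    deltaF K θ t (Finsupp.single x c + a) h = monomial hx c + deltaF K θ t a ha :=
  DFinsupp.single_add (β := fun t => Dsub θ K t) t ⟨_, single_mem_Dsub hx c⟩ ⟨a, ha⟩

@[elab_as_elim]
theorem monomial_induction {P : SkewF0 θ K → Prop} (r : SkewF0 θ K) (zero : P 0)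
    (add : ∀ r₁ r₂, P r₁ → P r₂ → P (r₁ + r₂))
    (monomial : ∀ t x (hx : x ∈ θ.Xt t) (c : K), P (monomial hx c)) : P r := by
  have deltaF_induction : ∀ t (a : X →₀ K) (ha : a ∈ Dsub θ K t), P (deltaF K θ t a ha) := by
    intro t a
    induction a using Finsupp.induction with
    | zero =>
      intro ha
      have hzero : deltaF K θ t 0 ha = 0 := DFinsupp.single_zero (β := fun t => Dsub θ K t) t
      rwa [hzero]
    | single_add x c a hxa hc ih =>
      intro ha
      have hx : x ∈ θ.Xt t :=
        mem_Xt_of_apply_ne_zero ha (by simp [Finsupp.notMem_support_iff.mp hxa, hc])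
      have ha' : a ∈ Dsub θ K t := by simpa using (Dsub θ K t).sub_mem ha (single_mem_Dsub hx c)
      rw [deltaF_single_add hx c ha']
      exact add _ _ (monomial t x hx c) (ih ha')
  exact DFinsupp.induction r zero fun t a _ _ _ hr => add _ _ (deltaF_induction t a a.2) hr

end Monomial

end SetPartialAction

open SetPartialAction

namespace FSkewMul

variable {G : Type*} [Group G] [DecidableEq G] {X : Type*} {θ : SetPartialAction G X}
  {K : Type*} [Field K] (S : FSkewMul θ K) {t s g : G} {x y : X}

theorem zero_mul (r : SkewF0 θ K) : S.mul 0 r = 0 := by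
  simpa using S.right_distrib 0 0 r

theorem mul_zero (r : SkewF0 θ K) : S.mul r 0 = 0 := by
  simpa using S.left_distrib r 0 0

theorem monomial_mul_monomial_apply (hx : x ∈ θ.Xt t) (hy : y ∈ θ.Xt s) (c d : K) (g : G)
    (p : X) : (S.mul (monomial hx c) (monomial hy d) g : X →₀ K) p =
      if g = t * s then Finsupp.single x c p * Finsupp.single y d (θ.h t⁻¹ p) else 0 := by
  rw [monomial, monomial, S.mul_single]
  split_ifs
  · exact amap_amap_inv_mul_apply (single_mem_Dsub hx c) _ p
  · rfl

theorem monomial_mul_monomial (hx : x ∈ θ.Xt t) (hy : y ∈ θ.Xt s) (hxy : θ.h t⁻¹ x = y)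
    (hg : t * s = g) (c d : K) : S.mul (monomial hx c) (monomial hy d) =
      monomial (hg ▸ θ.mem_Xt_mul hx (hxy ▸ hy) : x ∈ θ.Xt g) (c * d) := by
  ext g' p
  rw [S.monomial_mul_monomial_apply, monomial_apply, hg]
  split_ifs
  · obtain rfl | hp := eq_or_ne p x
    · simp [hxy]
    · simp [Finsupp.single_eq_of_ne hp]
  · rfl

theorem monomial_mul_monomial_of_ne (hx : x ∈ θ.Xt t) (hy : y ∈ θ.Xt s) (hxy : θ.h t⁻¹ x ≠ y)
    (c d : K) : S.mul (monomial hx c) (monomial hy d) = 0 := by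
  ext g p
  rw [S.monomial_mul_monomial_apply]
  obtain rfl | hp := eq_or_ne p x
  · simp [Finsupp.single_eq_of_ne hxy]
  · simp [Finsupp.single_eq_of_ne hp]

theorem monomial_one_mul_mul_monomial_one (hθ : θ.Free) (hx : x ∈ θ.Xt t) (r : SkewF0 θ K) :
    S.mul (S.mul (monomial (θ.mem_Xt_one x) 1) r) (monomial (θ.mem_Xt_one (θ.h t⁻¹ x)) 1) =
      monomial hx ((r t : X →₀ K) x) := by
  induction r using monomial_induction with
  | zero => simp [S.mul_zero, S.zero_mul, monomial_zero]
  | add r₁ r₂ ih₁ ih₂ => simp [S.left_distrib, S.right_distrib, ih₁, ih₂, monomial_add]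
  | monomial s z hz c =>
    have hone : θ.h 1⁻¹ x = x := by rw [inv_one, θ.h_one]
    obtain rfl | hxz := eq_or_ne x z
    · rw [S.monomial_mul_monomial _ hz hone (one_mul s), one_mul c]
      obtain rfl | hst := eq_or_ne s t
      · rw [S.monomial_mul_monomial _ _ rfl (mul_one s)]
        simp [monomial_apply]
      · have hne : θ.h s⁻¹ x ≠ θ.h t⁻¹ x := fun h => hst (hθ.eq_of_h_inv_eq hz hx h)
        rw [S.monomial_mul_monomial_of_ne _ _ hne]
        simp [monomial_apply, hst.symm, monomial_zero]
    · rw [S.monomial_mul_monomial_of_ne _ hz (hone.trans_ne hxz), S.zero_mul]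
      have hcoeff : (monomial hz c t : X →₀ K) x = 0 := by
        rw [monomial_apply]
        split_ifs
        · exact Finsupp.single_eq_of_ne hxz
        · rfl
      rw [hcoeff, monomial_zero]

end FSkewMul

section RegularRepresentation

variable {G : Type*} [Group G] [DecidableEq G] {X : Type*} {θ : SetPartialAction G X}
  {K : Type*} [Field K] {t : G} {x : X}

namespace SetPartialAction

variable (θ K) in
/-- The action of `F₀(X) ⋆_α G` on all functions `X → K` by `(a δ_t) f = a · (f ∘ h_{t⁻¹})`.
It is bundled as an additive map only, since the product of the ring is a separate datum. -/
noncomputable def regularRep : SkewF0 θ K →+ Module.End K (X → K) :=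
  DFinsupp.liftAddHom fun t => AddMonoidHom.mk'
    (fun a => LinearMap.pi fun x => (a : X →₀ K) x • LinearMap.proj (θ.h t⁻¹ x))
    (fun a b => by ext; simp [add_mul])

theorem regularRep_monomial (hx : x ∈ θ.Xt t) (c : K) (f : X → K) :
    regularRep θ K (monomial hx c) f = Finsupp.single x (c * f (θ.h t⁻¹ x)) := by
  ext p
  obtain rfl | hp := eq_or_ne p x
  · simp [regularRep, monomial, deltaF]
  · simp [regularRep, monomial, deltaF, Finsupp.single_eq_of_ne hp]

theorem regularRep_mul (S : FSkewMul θ K) (r s : SkewF0 θ K) :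
    regularRep θ K (S.mul r s) = regularRep θ K r * regularRep θ K s := by
  induction r using monomial_induction with
  | zero => simp [S.zero_mul]
  | add r₁ r₂ ih₁ ih₂ => rw [S.right_distrib, map_add, map_add, ih₁, ih₂, add_mul]
  | monomial t x hx c =>
    induction s using monomial_induction with
    | zero => simp [S.mul_zero]
    | add s₁ s₂ ih₁ ih₂ => rw [S.left_distrib, map_add, map_add, ih₁, ih₂, mul_add]
    | monomial s y hy d =>
      refine LinearMap.ext fun f => ?_
      rw [Module.End.mul_apply, regularRep_monomial, regularRep_monomial]
      obtain rfl | hxy := eq_or_ne (θ.h t⁻¹ x) y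
      · rw [S.monomial_mul_monomial hx hy rfl rfl, regularRep_monomial, θ.h_mul_inv hx hy,
          Finsupp.single_eq_same, mul_assoc]
      · rw [S.monomial_mul_monomial_of_ne hx hy hxy, Finsupp.single_eq_of_ne hxy]
        simp

theorem Invariant.regularRep_apply_eq_zero {V : Set X} (hV : θ.Invariant V) {f : X → K}
    (hf : ∀ y ∉ V, f y = 0) (r : SkewF0 θ K) (hx : x ∉ V) : regularRep θ K r f x = 0 := by
  induction r using monomial_induction with
  | zero => simp
  | add r₁ r₂ ih₁ ih₂ => simp [ih₁, ih₂]
  | monomial t y hy c =>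
    rw [regularRep_monomial]
    obtain rfl | hxy := eq_or_ne x y
    · have hxV : θ.h t⁻¹ x ∉ V := fun h => hx (hV.mem_of_h_inv_mem hy h)
      simp [hf _ hxV]
    · exact Finsupp.single_eq_of_ne hxy

variable (θ K) in
/-- The elements of `F₀(X) ⋆_α G` that send every function to one vanishing off `V`. For invariant
`V` this is the kernel of the action on `K^(X ∖ V)`, the quotient of `K^X` by the functions
vanishing off `V`. -/
def kerOff (V : Set X) : Set (SkewF0 θ K) :=
  {r | ∀ f : X → K, ∀ x ∉ V, regularRep θ K r f x = 0}

theorem Invariant.isSkewIdealF0_kerOff (S : FSkewMul θ K) {V : Set X} (hV : θ.Invariant V) :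
    IsSkewIdealF0 K S (kerOff θ K V) := by
  refine ⟨fun f x _ => by simp, fun r hr s hs f x hx => ?_, fun r hr f x hx => ?_,
    fun r hr s => ⟨fun f x hx => ?_, fun f x hx => ?_⟩⟩
  · simp [hr f x hx, hs f x hx]
  · simp [hr f x hx]
  · rw [regularRep_mul, Module.End.mul_apply]
    exact hr _ x hx
  · rw [regularRep_mul, Module.End.mul_apply]
    exact hV.regularRep_apply_eq_zero (hr f) s hx

theorem monomial_one_mem_kerOff_iff {V : Set X} :
    monomial (θ.mem_Xt_one x) 1 ∈ kerOff θ K V ↔ x ∈ V := by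
  refine ⟨fun h => ?_, fun hx f y hy => ?_⟩
  · by_contra hx
    simpa [regularRep_monomial] using h 1 x hx
  · rw [regularRep_monomial, Finsupp.single_eq_of_ne (ne_of_mem_of_not_mem hx hy).symm]

theorem monomial_sub_monomial_mem_kerOff (hx : x ∈ θ.Xt t) (hfix : θ.h t⁻¹ x = x) (c : K)
    (V : Set X) : monomial hx c - monomial (θ.mem_Xt_one x) c ∈ kerOff θ K V := by
  intro f y _
  rw [map_sub, LinearMap.sub_apply, regularRep_monomial, regularRep_monomial, hfix, inv_one,
    θ.h_one, sub_self, Pi.zero_apply]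

theorem minimal_of_simple (S : FSkewMul θ K)
    (hS : ∀ J : Set (SkewF0 θ K), IsSkewIdealF0 K S J → J = {0} ∨ J = Set.univ) :
    θ.Minimal := by
  intro V hV
  refine (hS _ (hV.isSkewIdealF0_kerOff S)).imp (fun h => ?_) fun h => ?_
  · refine Set.eq_empty_of_forall_notMem fun x hx => ?_
    have hmem : monomial (θ.mem_Xt_one x) (1 : K) ∈ kerOff θ K V :=
      monomial_one_mem_kerOff_iff.mpr hx
    rw [h] at hmem
    exact monomial_ne_zero _ one_ne_zero hmem
  · refine Set.eq_univ_of_forall fun x => monomial_one_mem_kerOff_iff.mp (?_ : _ ∈ kerOff θ K V)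
    rw [h]
    trivial

theorem free_of_simple (S : FSkewMul θ K)
    (hS : ∀ J : Set (SkewF0 θ K), IsSkewIdealF0 K S J → J = {0} ∨ J = Set.univ) :
    θ.Free := by
  intro t x hx hfix
  have hxt : x ∈ θ.Xt t := hfix ▸ θ.h_mem t x hx
  have hfix' : θ.h t⁻¹ x = x := by simpa [hfix] using θ.h_left_inv t x hx
  rcases hS _ (invariant_empty.isSkewIdealF0_kerOff S) with h | h
  · have hmem := monomial_sub_monomial_mem_kerOff hxt hfix' (1 : K) ∅
    rw [h, Set.mem_singleton_iff, sub_eq_zero] at hmem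
    exact eq_of_monomial_eq _ _ one_ne_zero hmem
  · have hmem : monomial (θ.mem_Xt_one x) (1 : K) ∈ kerOff θ K ∅ := h ▸ Set.mem_univ _
    exact (monomial_one_mem_kerOff_iff.mp hmem).elim

end SetPartialAction

end RegularRepresentation

namespace IsSkewIdealF0

variable {G : Type*} [Group G] [DecidableEq G] {X : Type*} {θ : SetPartialAction G X}
  {K : Type*} [Field K] {S : FSkewMul θ K} {J : Set (SkewF0 θ K)}

theorem zero_mem (hJ : IsSkewIdealF0 K S J) : 0 ∈ J :=
  hJ.1

theorem add_mem (hJ : IsSkewIdealF0 K S J) {r s : SkewF0 θ K} (hr : r ∈ J) (hs : s ∈ J) :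
    r + s ∈ J :=
  hJ.2.1 r hr s hs

theorem mul_mem_right (hJ : IsSkewIdealF0 K S J) {r : SkewF0 θ K} (hr : r ∈ J)
    (s : SkewF0 θ K) : S.mul r s ∈ J :=
  (hJ.2.2.2 r hr s).1

theorem mul_mem_left (hJ : IsSkewIdealF0 K S J) {r : SkewF0 θ K} (hr : r ∈ J)
    (s : SkewF0 θ K) : S.mul s r ∈ J :=
  (hJ.2.2.2 r hr s).2

theorem invariant_setOf_monomial_one_mem (hJ : IsSkewIdealF0 K S J) :
    θ.Invariant {x | monomial (θ.mem_Xt_one x) 1 ∈ J} := by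
  rintro t _ ⟨x, ⟨hxJ, hx⟩, rfl⟩
  have hback : θ.h t⁻¹ (θ.h t x) = x := θ.h_left_inv t x hx
  -- Conjugate `χ_x δ_1` by the arrow `x → h_t(x)`.
  have hmem := hJ.mul_mem_right (hJ.mul_mem_left hxJ (monomial (θ.h_mem t x hx) 1))
    (monomial hx 1)
  rwa [S.monomial_mul_monomial _ _ hback (mul_one t),
    S.monomial_mul_monomial _ _ hback (mul_inv_cancel t), mul_one (1 : K), mul_one (1 : K)] at hmem

theorem monomial_one_mem_of_apply_ne_zero (hJ : IsSkewIdealF0 K S J) (hθ : θ.Free)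
    {r : SkewF0 θ K} (hr : r ∈ J) {t : G} {x : X} (hrx : (r t : X →₀ K) x ≠ 0) :
    monomial (θ.mem_Xt_one x) 1 ∈ J := by
  have hx : x ∈ θ.Xt t := mem_Xt_of_apply_ne_zero (r t).2 hrx
  have hmem : monomial hx ((r t : X →₀ K) x) ∈ J := by
    rw [← S.monomial_one_mul_mul_monomial_one hθ hx r]
    exact hJ.mul_mem_right (hJ.mul_mem_left hr _) _
  have hmul := hJ.mul_mem_right hmem (monomial (θ.h_inv_mem hx) ((r t : X →₀ K) x)⁻¹)
  rwa [S.monomial_mul_monomial _ _ rfl (mul_inv_cancel t), mul_inv_cancel₀ hrx] at hmul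

theorem eq_univ_of_forall_monomial_one_mem (hJ : IsSkewIdealF0 K S J)
    (h : ∀ x, monomial (θ.mem_Xt_one x) 1 ∈ J) : J = Set.univ := by
  refine Set.eq_univ_of_forall fun r => ?_
  induction r using monomial_induction with
  | zero => exact hJ.zero_mem
  | add r₁ r₂ ih₁ ih₂ => exact hJ.add_mem ih₁ ih₂
  | monomial t x hx c =>
    have hmem := hJ.mul_mem_right (h x) (monomial hx c)
    rwa [S.monomial_mul_monomial _ _ (by rw [inv_one, θ.h_one]) (one_mul t), one_mul c] at hmem

theorem eq_zero_or_eq_univ_of_minimal_of_free (hJ : IsSkewIdealF0 K S J) (hmin : θ.Minimal)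
    (hfree : θ.Free) : J = {0} ∨ J = Set.univ := by
  refine (hmin _ hJ.invariant_setOf_monomial_one_mem).imp (fun hV => ?_) fun hV => ?_
  · refine Set.eq_singleton_iff_unique_mem.mpr ⟨hJ.zero_mem, fun r hr => ?_⟩
    ext t x
    by_contra hrx
    exact Set.eq_empty_iff_forall_notMem.mp hV x (hJ.monomial_one_mem_of_apply_ne_zero hfree hr hrx)
  · exact hJ.eq_univ_of_forall_monomial_one_mem (Set.eq_univ_iff_forall.mp hV)

end IsSkewIdealF0

theorem simple_iff_minimal_and_free_general
    {G : Type*} [Group G] [DecidableEq G] {X : Type*} (θ : SetPartialAction G X)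
    (K : Type*) [Field K] (S : FSkewMul θ K) :
    (∀ J : Set (SkewF0 θ K), IsSkewIdealF0 K S J → J = {0} ∨ J = Set.univ) ↔
      (θ.Minimal ∧ θ.Free) :=
  ⟨fun hS => ⟨minimal_of_simple S hS, free_of_simple S hS⟩,
    fun ⟨hmin, hfree⟩ _ hJ => hJ.eq_zero_or_eq_univ_of_minimal_of_free hmin hfree⟩

theorem simple_iff_minimal_and_free
    {G : Type*} [CommGroup G] [DecidableEq G] {X : Type*} [Nonempty X]
    (θ : SetPartialAction G X)
    (K : Type*) [Field K] (S : FSkewMul θ K) :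
    (∀ J : Set (SkewF0 θ K), IsSkewIdealF0 K S J → J = {0} ∨ J = Set.univ) ↔
      (θ.Minimal ∧ θ.Free) :=
  simple_iff_minimal_and_free_general θ K S
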